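/- arXiv:2007.01894 — 3 statements merged into one kernel-verified Lean document; each statement's English description precedes it below -/
import Mathlib

section
/- The integral ∫_0^∞ t ln(1 - e^{-t}) / (e^{-t} - 1) dt equals 2ζ(3), where ζ is the Riemann zeta function. -/
open MeasureTheory

/-- The Riemann zeta value at integer `s ≥ 2`, `ζ(s) = ∑_{n=1}^∞ 1/n^s`. -/
noncomputable def zetaVal (s : ℕ) : ℝ := ∑' n : ℕ, 1 / ((n + 1 : ℝ)) ^ s

noncomputable def auxL (t : ℝ) : ℝ := -Real.log (1 - Real.exp (-t))

lemma aux_exp {t : ℝ} (ht : 0 < t) : 0 < 1 - Real.exp (-t) := by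
  have : Real.exp (-t) < 1 := Real.exp_zero ▸ Real.exp_lt_exp.2 (by linarith)
  linarith

lemma auxL_pos {t : ℝ} (ht : 0 < t) : 0 < auxL t := by
  have h1 := aux_exp ht
  have h2 := Real.exp_pos (-t)
  have := Real.log_neg h1 (by linarith)
  unfold auxL; linarith

lemma auxL_invol {t : ℝ} (ht : 0 < t) : auxL (auxL t) = t := by
  have h1 := aux_exp ht
  unfold auxL
  rw [neg_neg, Real.exp_log h1]
  simp

lemma auxL_deriv {t : ℝ} (ht : 0 < t) :
    HasDerivAt auxL (-(Real.exp (-t) / (1 - Real.exp (-t)))) t := by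
  have h1 := aux_exp ht
  have h : HasDerivAt (fun t : ℝ => 1 - Real.exp (-t)) (Real.exp (-t)) t := by
    have := ((hasDerivAt_neg t).exp).const_sub 1
    simpa using this
  exact (h.log h1.ne').neg

lemma aux_term (n : ℕ) :
    (∫ t in Set.Ioi (0:ℝ), t * (Real.exp (-t) ^ (n+1) / (n+1))) = 1 / ((n+1:ℝ))^3 := by
  have hn : (0:ℝ) < n + 1 := by positivity
  have h := Real.integral_rpow_mul_exp_neg_mul_Ioi (a := 2) (r := (n+1:ℝ)) (by norm_num) hn
  have e : ∀ t : ℝ, t * (Real.exp (-t) ^ (n+1) / (n+1)) =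
      (t ^ ((2:ℝ)-1) * Real.exp (-((n+1:ℝ) * t))) * (1/(n+1:ℝ)) := by
    intro t
    rw [← Real.exp_nat_mul, show (2:ℝ)-1 = 1 by norm_num, Real.rpow_one]
    push_cast
    rw [show ((n:ℝ)+1) * -t = -((n+1) * t) by ring]
    ring
  simp_rw [e]
  rw [integral_mul_const, h, Real.Gamma_two, Real.rpow_two]
  field_simp

lemma aux_summable : Summable (fun n : ℕ => 1 / ((n+1:ℝ))^3) := by
  have := (summable_nat_add_iff 1).2 (Real.summable_one_div_nat_pow (p := 3) |>.2 (by norm_num))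
  simpa using this

lemma zeta_pos : 0 < zetaVal 3 := by
  unfold zetaVal
  exact aux_summable.tsum_pos (fun n => by positivity) 0 (by norm_num)

lemma aux_part1 : (∫ t in Set.Ioi (0:ℝ), t * auxL t) = zetaVal 3 := by
  have hint : ∀ n : ℕ, Integrable (fun t : ℝ => t * (Real.exp (-t) ^ (n+1) / (n+1)))
      (volume.restrict (Set.Ioi 0)) := by
    intro n
    by_contra hc
    have h := aux_term n
    rw [integral_undef hc] at h
    have : (0:ℝ) < 1 / ((n+1:ℝ))^3 := by positivity
    linarith
  have hs : Summable (fun n : ℕ => ∫ t in Set.Ioi (0:ℝ),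
      ‖t * (Real.exp (-t) ^ (n+1) / (n+1))‖) := by
    refine aux_summable.congr fun n => ?_
    rw [← aux_term n]
    refine setIntegral_congr_fun measurableSet_Ioi fun t ht => ?_
    have ht' : 0 < t := ht
    exact (Real.norm_of_nonneg (by positivity)).symm
  have h := integral_tsum_of_summable_integral_norm hint hs
  unfold zetaVal
  simp_rw [aux_term] at h
  rw [h]
  refine setIntegral_congr_fun measurableSet_Ioi fun t ht => ?_
  have ht' : 0 < t := ht
  have h1 : |Real.exp (-t)| < 1 := by
    rw [abs_of_pos (Real.exp_pos _)]; linarith [aux_exp ht']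
  exact ((Real.hasSum_pow_div_log_of_abs_lt_one h1).mul_left t).tsum_eq.symm

lemma aux_int1 : IntegrableOn (fun t => t * auxL t) (Set.Ioi 0) := by
  by_contra hc
  have h := aux_part1
  rw [integral_undef hc] at h
  linarith [zeta_pos]

lemma aux_image : auxL '' Set.Ioi 0 = Set.Ioi 0 := by
  ext x
  constructor
  · rintro ⟨t, ht, rfl⟩
    exact auxL_pos ht
  · intro hx
    exact ⟨auxL x, auxL_pos hx, auxL_invol hx⟩

lemma aux_inj : Set.InjOn auxL (Set.Ioi 0) := by
  intro a ha b hb h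
  rw [← auxL_invol ha, h, auxL_invol hb]

lemma aux_congr : Set.EqOn (fun t => |(-(Real.exp (-t) / (1 - Real.exp (-t))))| •
    (auxL t * auxL (auxL t)))
    (fun t => Real.exp (-t) / (1 - Real.exp (-t)) * (t * auxL t)) (Set.Ioi 0) := by
  intro t ht
  have h1 := aux_exp ht
  have h2 := Real.exp_pos (-t)
  simp only [smul_eq_mul]
  rw [auxL_invol ht, abs_neg, abs_of_pos (by positivity)]
  ring

theorem integral_example_one :
    (∫ t in Set.Ioi (0 : ℝ),
      t * Real.log (1 - Real.exp (-t)) / (Real.exp (-t) - 1)) = 2 * zetaVal 3 := by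
  have hd : ∀ t ∈ Set.Ioi (0:ℝ), HasDerivWithinAt auxL
      (-(Real.exp (-t) / (1 - Real.exp (-t)))) (Set.Ioi 0) t :=
    fun t ht => (auxL_deriv ht).hasDerivWithinAt
  have h2 := integral_image_eq_integral_abs_deriv_smul measurableSet_Ioi hd aux_inj
    (fun t => t * auxL t)
  have i2 := (integrableOn_image_iff_integrableOn_abs_deriv_smul measurableSet_Ioi hd aux_inj
    (fun t => t * auxL t)).1 (by rw [aux_image]; exact aux_int1)
  rw [aux_image, aux_part1, setIntegral_congr_fun measurableSet_Ioi aux_congr] at h2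
  have i3 := i2.congr_fun aux_congr measurableSet_Ioi
  have h3 := integral_add aux_int1 i3
  rw [← h2, aux_part1] at h3
  rw [two_mul, ← h3]
  refine setIntegral_congr_fun measurableSet_Ioi fun t ht => ?_
  have h1 := aux_exp ht
  have h4 : Real.exp (-t) - 1 ≠ 0 := by linarith
  simp only [auxL]
  field_simp
  ring
end

section
/- The integral ∫_0^∞ t^2 ln(1 - e^{-t}) / (e^{-t} - 1)^2 dt equals 2ζ(2) − 4ζ(3) − (5/2)ζ(4), where ζ is the Riemann zeta function. -/
open MeasureTheory

/-- Harmonic numbers as reals. -/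
noncomputable def hN (n : ℕ) : ℝ := ∑ i ∈ Finset.range n, 1 / ((i : ℝ) + 1)

lemma hN_succ (n : ℕ) : hN (n + 1) = hN n + 1 / ((n : ℝ) + 1) := by
  simp [hN, Finset.sum_range_succ]

lemma hasSum_antidiag {f : ℕ × ℕ → ℝ} {a : ℝ} (h : HasSum f a) :
    HasSum (fun m => ∑ p ∈ Finset.HasAntidiagonal.antidiagonal m, f p) a := by
  have h1 := (Finset.HasAntidiagonal.sigmaAntidiagonalEquivProd (A := ℕ)).hasSum_iff.2 h
  refine h1.sigma (fun m => ?_)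
  have := hasSum_fintype (fun p : Finset.HasAntidiagonal.antidiagonal m => f p)
  rw [Finset.sum_coe_sort (Finset.HasAntidiagonal.antidiagonal m) f] at this
  exact this

lemma hasSum_tele (N : ℕ) :
    HasSum (fun k : ℕ => 1 / ((k : ℝ) + N + 1) - 1 / ((k : ℝ) + N + 2)) (1 / ((N : ℝ) + 1)) := by
  rw [hasSum_iff_tendsto_nat_of_nonneg]
  · have e : ∀ n : ℕ, ∑ k ∈ Finset.range n, (1 / ((k : ℝ) + N + 1) - 1 / ((k : ℝ) + N + 2))
        = 1 / ((N : ℝ) + 1) - 1 / ((n : ℝ) + N + 1) := by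
      intro n
      induction n with
      | zero => simp
      | succ n ih =>
        rw [Finset.sum_range_succ, ih]; push_cast; ring
    simp_rw [e]
    have : Filter.Tendsto (fun n : ℕ => 1 / ((n : ℝ) + N + 1)) Filter.atTop (nhds 0) := by
      have := (Filter.tendsto_add_atTop_iff_nat N).2
        (tendsto_one_div_add_atTop_nhds_zero_nat (𝕜 := ℝ))
      simpa using this
    simpa using this.const_sub (1 / ((N : ℝ) + 1))
  · intro k
    rw [sub_nonneg]
    apply one_div_le_one_div_of_le
    · positivity
    · linarith

lemma hasSum_harm (N : ℕ) :
    HasSum (fun k : ℕ => 1 / ((k : ℝ) + 1) - 1 / ((k : ℝ) + N + 1)) (hN N) := by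
  induction N with
  | zero => simpa [hN] using (hasSum_zero : HasSum (fun _ : ℕ => (0 : ℝ)) 0)
  | succ N ih =>
    rw [hN_succ]
    convert! ih.add (hasSum_tele N) using 2 with k
    push_cast; ring

lemma hasSum_harm' (n : ℕ) :
    HasSum (fun k : ℕ => 1 / (((k : ℝ) + 1) * ((n + 1) + (k + 1)))) (hN (n + 1) / (n + 1)) := by
  convert! (hasSum_harm (n + 1)).div_const ((n : ℝ) + 1) using 2 with k
  have : (k : ℝ) + 1 ≠ 0 := by positivity
  have : (n : ℝ) + 1 ≠ 0 := by positivity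
  have : (n : ℝ) + 1 + (k + 1) ≠ 0 := by positivity
  have : (k : ℝ) + ((n : ℝ) + 1) + 1 ≠ 0 := by positivity
  push_cast
  field_simp
  ring

lemma summable_zeta {s : ℕ} (hs : 2 ≤ s) : Summable (fun n : ℕ => 1 / ((n : ℝ) + 1) ^ s) := by
  have := (summable_nat_add_iff 1).2 (Real.summable_one_div_nat_pow.2 (show 1 < s by omega))
  simpa using this

lemma hasSum_zetaVal {s : ℕ} (hs : 2 ≤ s) :
    HasSum (fun n : ℕ => 1 / ((n : ℝ) + 1) ^ s) (zetaVal s) := (summable_zeta hs).hasSum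

lemma zetaVal_two : zetaVal 2 = Real.pi ^ 2 / 6 := by
  have := (hasSum_nat_add_iff' 1).2 hasSum_zeta_two
  refine (hasSum_zetaVal le_rfl).unique ?_
  simpa using this

lemma zetaVal_four : zetaVal 4 = Real.pi ^ 4 / 90 := by
  have := (hasSum_nat_add_iff' 1).2 hasSum_zeta_four
  refine (hasSum_zetaVal (by norm_num)).unique ?_
  simpa using this

/-- `∑ H_n / n^3 = ζ(2)^2 / 2`. -/
lemma euler_three : HasSum (fun n : ℕ => hN (n + 1) / ((n : ℝ) + 1) ^ 3) (zetaVal 2 ^ 2 / 2) := by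
  have hz := hasSum_zetaVal (le_refl 2)
  have hP : Summable (fun p : ℕ × ℕ => 1 / ((p.1 : ℝ) + 1) ^ 2 * (1 / ((p.2 : ℝ) + 1) ^ 2)) :=
    hz.summable.mul_of_nonneg hz.summable (fun n => by positivity) (fun n => by positivity)
  have hPs := hz.mul hz hP
  have hF : Summable (fun p : ℕ × ℕ =>
      1 / (((p.1 : ℝ) + 1) ^ 2 * ((p.2 + 1) * ((p.1 + 1) + (p.2 + 1))))) := by
    refine hP.of_nonneg_of_le (fun p => by positivity) (fun p => ?_)
    rw [one_div_mul_one_div]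
    apply one_div_le_one_div_of_le (by positivity)
    gcongr
    nlinarith [(Nat.cast_nonneg p.1 : (0 : ℝ) ≤ p.1), (Nat.cast_nonneg p.2 : (0 : ℝ) ≤ p.2)]
  obtain ⟨A, hA⟩ := hF
  have hA' := (Equiv.prodComm ℕ ℕ).hasSum_iff.2 hA
  have h2 : A + A = zetaVal 2 * zetaVal 2 := by
    refine (hA.add hA').unique ?_
    convert! hPs using 2 with p
    simp only [Function.comp, Equiv.prodComm_apply, Prod.fst_swap, Prod.snd_swap]
    have : (p.1 : ℝ) + 1 ≠ 0 := by positivity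
    have : (p.2 : ℝ) + 1 ≠ 0 := by positivity
    have : (p.1 : ℝ) + 1 + (p.2 + 1) ≠ 0 := by positivity
    have : (p.2 : ℝ) + 1 + (p.1 + 1) ≠ 0 := by positivity
    field_simp
    ring
  have hA2 : zetaVal 2 ^ 2 / 2 = A := by linarith [sq (zetaVal 2)]
  rw [hA2]
  refine hA.prod_fiberwise (fun n => ?_)
  convert! (hasSum_harm' n).div_const (((n : ℝ) + 1) ^ 2) using 1
  · ext k; field_simp
  · field_simp

lemma summable_three_half : Summable (fun n : ℕ => 1 / (((n : ℝ) + 1) * √((n : ℝ) + 1))) := by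
  have := (summable_nat_add_iff 1).2 (Real.summable_one_div_nat_rpow.2 (show (1 : ℝ) < 3 / 2 by norm_num))
  refine this.congr (fun n => ?_)
  have h : (0 : ℝ) < (n : ℝ) + 1 := by positivity
  rw [show (3 / 2 : ℝ) = 1 + 1 / 2 by norm_num]
  push_cast
  rw [Real.rpow_add h, Real.rpow_one, Real.sqrt_eq_rpow]

/-- `∑ H_n / n^2 = 2 ζ(3)`. -/
lemma euler_two : HasSum (fun n : ℕ => hN (n + 1) / ((n : ℝ) + 1) ^ 2) (2 * zetaVal 3) := by
  have hz := hasSum_zetaVal (show 2 ≤ 3 by norm_num)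
  have hP : Summable (fun p : ℕ × ℕ => 1 / (((p.1 : ℝ) + 1) * √((p.1 : ℝ) + 1)) *
      (1 / (((p.2 : ℝ) + 1) * √((p.2 : ℝ) + 1)))) :=
    summable_three_half.mul_of_nonneg summable_three_half
      (fun n => by positivity) (fun n => by positivity)
  have hF : Summable (fun p : ℕ × ℕ =>
      1 / (((p.1 : ℝ) + 1) * ((p.2 + 1) * ((p.1 + 1) + (p.2 + 1))))) := by
    refine hP.of_nonneg_of_le (fun p => by positivity) (fun p => ?_)
    rw [one_div_mul_one_div]
    apply one_div_le_one_div_of_le (by positivity)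
    have h1 : (0 : ℝ) < (p.1 : ℝ) + 1 := by positivity
    have h2 : (0 : ℝ) < (p.2 : ℝ) + 1 := by positivity
    have h3 := Real.sq_sqrt h1.le
    have h4 := Real.sq_sqrt h2.le
    have h5 : √((p.1 : ℝ) + 1) * √((p.2 : ℝ) + 1) ≤ (p.1 + 1) + (p.2 + 1) := by
      nlinarith [sq_nonneg (√((p.1 : ℝ) + 1) - √((p.2 : ℝ) + 1))]
    calc _ = ((p.1 : ℝ) + 1) * ((p.2 + 1) * (√((p.1 : ℝ) + 1) * √((p.2 : ℝ) + 1))) := by ring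
      _ ≤ _ := by gcongr
  have hG : Summable (fun p : ℕ × ℕ => 1 / (((p.1 : ℝ) + 1) * ((p.1 + 1) + (p.2 + 1)) ^ 2)) := by
    refine hF.of_nonneg_of_le (fun p => by positivity) (fun p => ?_)
    apply one_div_le_one_div_of_le (by positivity)
    gcongr
    nlinarith [(Nat.cast_nonneg p.1 : (0 : ℝ) ≤ p.1), (Nat.cast_nonneg p.2 : (0 : ℝ) ≤ p.2)]
  obtain ⟨S, hS⟩ := hF
  obtain ⟨B, hB⟩ := hG
  have hB' := (Equiv.prodComm ℕ ℕ).hasSum_iff.2 hB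
  have h2 : B + B = S := by
    refine (hB.add hB').unique ?_
    convert! hS using 2 with p
    simp only [Function.comp, Equiv.prodComm_apply, Prod.fst_swap, Prod.snd_swap]
    rw [add_comm ((p.2 : ℝ) + 1) (p.1 + 1)]
    have : (p.1 : ℝ) + 1 ≠ 0 := by positivity
    have : (p.2 : ℝ) + 1 ≠ 0 := by positivity
    have : (p.1 : ℝ) + 1 + (p.2 + 1) ≠ 0 := by positivity
    field_simp
    ring
  have hT : HasSum (fun n : ℕ => hN (n + 1) / ((n : ℝ) + 1) ^ 2) S := by
    refine hS.prod_fiberwise (fun n => ?_)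
    convert! (hasSum_harm' n).div_const ((n : ℝ) + 1) using 1
    · ext k; field_simp
    · field_simp
  have hD := hasSum_antidiag hB
  have hE := (hasSum_nat_add_iff' 1).2 (hT.sub hz)
  have h3 : B = S - zetaVal 3 := by
    refine hD.unique ?_
    convert! hE using 1
    · ext m
      have e : ∀ p ∈ Finset.HasAntidiagonal.antidiagonal m, 1 / (((p.1 : ℝ) + 1) * ((p.1 + 1) + (p.2 + 1)) ^ 2)
          = (fun i _ : ℕ => 1 / ((i : ℝ) + 1) / ((m : ℝ) + 2) ^ 2) p.1 p.2 := by
        intro p hp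
        have : (m : ℝ) = p.1 + p.2 := by
          rw [← Finset.HasAntidiagonal.mem_antidiagonal.1 hp]; push_cast; rfl
        simp only [this, div_div]; ring_nf
      rw [Finset.sum_congr rfl e, Finset.Nat.sum_antidiagonal_eq_sum_range_succ
        (fun i _ : ℕ => 1 / ((i : ℝ) + 1) / ((m : ℝ) + 2) ^ 2), ← Finset.sum_div]
      rw [hN_succ (m + 1)]
      change hN (m + 1) / _ = _
      push_cast
      have : (m : ℝ) + 1 + 1 ≠ 0 := by positivity
      rw [show (m : ℝ) + 2 = m + 1 + 1 by ring]
      field_simp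
      ring
    · simp [hN]
  have : 2 * zetaVal 3 = S := by linarith
  rw [this]; exact hT

lemma hasSum_coef {x : ℝ} (h0 : 0 ≤ x) (h1 : x < 1) :
    HasSum (fun n : ℕ => (((n : ℝ) + 2) * hN (n + 1) - (n + 1)) * x ^ (n + 1))
      (-Real.log (1 - x) / (1 - x) ^ 2) := by
  have hx : |x| < 1 := by rwa [abs_of_nonneg h0]
  have hL := Real.hasSum_pow_div_log_of_abs_lt_one hx
  have hM : HasSum (fun n : ℕ => ((n : ℝ) + 1) * x ^ n) (1 / (1 - x) ^ 2) := by
    have := (hasSum_coe_mul_geometric_of_norm_lt_one (𝕜 := ℝ) (r := x) hx).add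
      (hasSum_geometric_of_lt_one h0 h1)
    convert! this using 1
    · ext n; ring
    · have : 1 - x ≠ 0 := by linarith
      field_simp
      ring
  have hP := hL.mul hM (hL.summable.mul_of_nonneg hM.summable
    (fun n => by positivity) (fun n => by positivity))
  have hD := hasSum_antidiag hP
  convert! hD using 1
  · ext n
    have e : ∀ p ∈ Finset.HasAntidiagonal.antidiagonal n,
        x ^ (p.1 + 1) / ((p.1 : ℝ) + 1) * (((p.2 : ℝ) + 1) * x ^ p.2)
          = (fun i _ : ℕ => (((n : ℝ) + 2) * (1 / ((i : ℝ) + 1)) - 1) * x ^ (n + 1)) p.1 p.2 := by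
      intro p hp
      rw [← Finset.HasAntidiagonal.mem_antidiagonal.1 hp]; push_cast
      have : (p.1 : ℝ) + 1 ≠ 0 := by positivity
      field_simp
      ring
    rw [Finset.sum_congr rfl e, Finset.Nat.sum_antidiagonal_eq_sum_range_succ
      (fun i _ : ℕ => (((n : ℝ) + 2) * (1 / ((i : ℝ) + 1)) - 1) * x ^ (n + 1)),
      ← Finset.sum_mul, Finset.sum_sub_distrib, ← Finset.mul_sum]
    simp [hN]
  · ring

lemma coef_nonneg (n : ℕ) : 0 ≤ ((n : ℝ) + 2) * hN (n + 1) - (n + 1) := by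
  have : 1 ≤ hN (n + 1) := by
    induction n with
    | zero => simp [hN]
    | succ n ih => rw [hN_succ]; have : (0 : ℝ) ≤ 1 / (((n + 1 : ℕ) : ℝ) + 1) := by positivity
                   linarith
  nlinarith [(Nat.cast_nonneg n : (0 : ℝ) ≤ n)]

lemma int_term (n : ℕ) :
    ∫ t in Set.Ioi (0 : ℝ), t ^ 2 * Real.exp (-t) ^ (n + 1) = 2 / ((n : ℝ) + 1) ^ 3 := by
  have h := Real.integral_rpow_mul_exp_neg_mul_Ioi (a := 3) (r := (n : ℝ) + 1)
    (by norm_num) (by positivity)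
  have hG : Real.Gamma 3 = 2 := by
    have := Real.Gamma_nat_eq_factorial 2
    norm_num at this
    simpa [Nat.factorial] using this
  rw [hG] at h
  have e : ∀ t : ℝ, t ^ 2 * Real.exp (-t) ^ (n + 1)
      = t ^ ((3 : ℝ) - 1) * Real.exp (-(((n : ℝ) + 1) * t)) := by
    intro t
    rw [show (3 : ℝ) - 1 = ((2 : ℕ) : ℝ) by norm_num, Real.rpow_natCast, ← Real.exp_nat_mul]
    push_cast; ring_nf
  simp_rw [e]
  rw [h, show (3 : ℝ) = ((3 : ℕ) : ℝ) by norm_num, Real.rpow_natCast]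
  field_simp

theorem integral_example_two :
    (∫ t in Set.Ioi (0 : ℝ),
      t ^ 2 * Real.log (1 - Real.exp (-t)) / (Real.exp (-t) - 1) ^ 2) =
      2 * zetaVal 2 - 4 * zetaVal 3 - (5 / 2) * zetaVal 4 := by
  set c : ℕ → ℝ := fun n => ((n : ℝ) + 2) * hN (n + 1) - (n + 1) with hc
  have hint : ∀ n : ℕ, ∫ t in Set.Ioi (0 : ℝ), c n * (t ^ 2 * Real.exp (-t) ^ (n + 1))
      = c n * (2 / ((n : ℝ) + 1) ^ 3) := by
    intro n
    rw [integral_const_mul, int_term]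
  have hsum : HasSum (fun n : ℕ => c n * (2 / ((n : ℝ) + 1) ^ 3))
      (2 * (2 * zetaVal 3 + zetaVal 2 ^ 2 / 2 - zetaVal 2)) := by
    convert! ((euler_two.add euler_three).sub (hasSum_zetaVal (le_refl 2))).mul_left 2 using 2 with n
    simp only [hc]
    field_simp
    ring
  have hI : ∀ n : ℕ, Integrable (fun t : ℝ => c n * (t ^ 2 * Real.exp (-t) ^ (n + 1)))
      (volume.restrict (Set.Ioi 0)) := by
    intro n
    refine Integrable.const_mul ?_ _
    apply Integrable.of_integral_ne_zero
    rw [int_term]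
    positivity
  have hnorm : Summable (fun n : ℕ =>
      ∫ t in Set.Ioi (0 : ℝ), ‖c n * (t ^ 2 * Real.exp (-t) ^ (n + 1))‖) := by
    refine hsum.summable.congr (fun n => ?_)
    rw [← hint]
    congr 1
    ext t
    rw [Real.norm_of_nonneg]
    exact mul_nonneg (coef_nonneg n) (by positivity)
  have key := hasSum_integral_of_summable_integral_norm hI hnorm
  simp_rw [hint] at key
  have hval := key.unique hsum
  have hpt : ∫ t in Set.Ioi (0 : ℝ),
      t ^ 2 * Real.log (1 - Real.exp (-t)) / (Real.exp (-t) - 1) ^ 2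
      = ∫ t in Set.Ioi (0 : ℝ), -(∑' n : ℕ, c n * (t ^ 2 * Real.exp (-t) ^ (n + 1))) := by
    refine setIntegral_congr_fun measurableSet_Ioi (fun t ht => ?_)
    have h1 : Real.exp (-t) < 1 := by
      rw [Real.exp_lt_one_iff]; simpa using ht
    have := (hasSum_coef (Real.exp_pos (-t)).le h1).mul_left (t ^ 2)
    have h2 : HasSum (fun n : ℕ => c n * (t ^ 2 * Real.exp (-t) ^ (n + 1)))
        (t ^ 2 * (-Real.log (1 - Real.exp (-t)) / (1 - Real.exp (-t)) ^ 2)) := by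
      convert! this using 2 with n
      simp only [hc]; ring
    simp only [h2.tsum_eq]
    rw [show (Real.exp (-t) - 1) ^ 2 = (1 - Real.exp (-t)) ^ 2 by ring]
    ring
  rw [hpt, integral_neg, hval, zetaVal_two, zetaVal_four]
  ring
end

section
/- For natural numbers m and r with r ≥ 1 and m > r, the function t ↦ t^{m-1} ln(1 - e^{-t}) / (1 - e^{-t})^r is integrable on (0, ∞). -/
open MeasureTheory

lemma log_bound_aux (t : ℝ) (ht : 0 < t) :
    t / (1 + t) ≤ 1 - Real.exp (-t) ∧ |Real.log (1 - Real.exp (-t))| ≤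
      2 * Real.exp (-t) * (t ^ (-(1/2) : ℝ) * (1 + t)) := by
  have he : Real.exp (-t) < 1 := by simpa using ht
  have hu1 : t / (1 + t) ≤ 1 - Real.exp (-t) := by
    have h1 : Real.exp (-t) ≤ 1 / (1 + t) := by
      rw [Real.exp_neg, ← one_div]
      apply one_div_le_one_div_of_le (by linarith)
      linarith [Real.add_one_le_exp t]
    have h2 : t / (1 + t) = 1 - 1 / (1 + t) := by field_simp; ring
    linarith
  refine ⟨hu1, ?_⟩
  have hepos := Real.exp_pos (-t)
  set u := 1 - Real.exp (-t) with hu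
  have hupos : 0 < u := by linarith
  have hul : u ≤ 1 := by linarith
  have hE : Real.exp (-t) = 1 - u := by linarith
  rw [hE]
  have hs : 0 < √u := Real.sqrt_pos.2 hupos
  have hss : √u * √u = u := Real.mul_self_sqrt hupos.le
  have hs1 : √u ≤ 1 := by nlinarith
  have hst : 0 < √t := Real.sqrt_pos.2 ht
  have hstt : √t * √t = t := Real.mul_self_sqrt ht.le
  have hlog : -Real.log u ≤ 2 * ((√u)⁻¹ - 1) := by
    have := Real.log_le_sub_one_of_pos (inv_pos.2 hs)
    rw [Real.log_inv, Real.log_sqrt hupos.le] at this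
    linarith
  rw [abs_of_nonpos (Real.log_nonpos hupos.le hul)]
  have h3 : (√u)⁻¹ - 1 ≤ (1 - u) * (√u)⁻¹ := by
    have : (√u)⁻¹ - 1 = (1 - √u) * (√u)⁻¹ := by field_simp
    rw [this]
    apply mul_le_mul_of_nonneg_right _ (by positivity)
    nlinarith
  have h4 : (√u)⁻¹ ≤ t ^ (-(1/2) : ℝ) * (1 + t) := by
    rw [Real.rpow_neg ht.le, ← Real.sqrt_eq_rpow, inv_mul_eq_div, inv_le_comm₀ hs (by positivity),
      inv_div]
    apply Real.le_sqrt_of_sq_le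
    refine le_trans ?_ hu1
    rw [div_pow, Real.sq_sqrt ht.le]
    apply div_le_div_of_nonneg_left ht.le (by positivity)
    nlinarith
  have h5 := mul_le_mul_of_nonneg_left h4 (show 0 ≤ 1 - u by linarith)
  linarith

theorem integrand_integrableOn (m r : ℕ) (hr : 1 ≤ r) (hm : r < m) :
    IntegrableOn
      (fun t : ℝ => t ^ (m - 1) * Real.log (1 - Real.exp (-t)) / (1 - Real.exp (-t)) ^ r)
      (Set.Ioi 0) := by
  obtain ⟨k, rfl⟩ : ∃ k, m = k + r + 1 := ⟨m - r - 1, by omega⟩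
  have g1 := Real.GammaIntegral_convergent (s := (k : ℝ) + 1/2) (by positivity)
  have g2 := Real.GammaIntegral_convergent (s := (k : ℝ) + 1/2 + (r + 1 : ℕ)) (by positivity)
  have g := (g1.add g2).const_mul (2 * 2 ^ r)
  refine Integrable.mono' g (Measurable.aestronglyMeasurable (by fun_prop)) ?_
  refine (ae_restrict_iff' measurableSet_Ioi).2 (Filter.Eventually.of_forall fun t ht => ?_)
  have ht : 0 < t := ht
  obtain ⟨h1, h2⟩ := log_bound_aux t ht
  have hq : 0 < t / (1 + t) := by positivity
  have hu : 0 < 1 - Real.exp (-t) := by linarith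
  have e1 : t ^ ((k : ℝ) + 1/2 - 1) = t ^ k * t ^ (-(1/2) : ℝ) := by
    rw [← Real.rpow_natCast, ← Real.rpow_add ht]; congr 1; ring
  have e2 : t ^ ((k : ℝ) + 1/2 + (r + 1 : ℕ) - 1) = t ^ k * t ^ (-(1/2) : ℝ) * t ^ (r + 1) := by
    rw [← Real.rpow_natCast, ← Real.rpow_natCast, ← Real.rpow_add ht, ← Real.rpow_add ht]
    congr 1; ring
  have h3 : (1 + t) ^ (r + 1) ≤ 2 ^ r * (1 + t ^ (r + 1)) := by
    simpa using add_pow_le zero_le_one ht.le (r + 1)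
  simp only [Pi.add_apply, e1, e2, Nat.add_sub_cancel]
  rw [Real.norm_eq_abs, abs_div, abs_mul, abs_of_pos (pow_pos ht _), abs_of_pos (pow_pos hu _)]
  have hw : 0 < t ^ (-(1/2) : ℝ) := Real.rpow_pos_of_pos ht _
  calc t ^ (k + r) * |Real.log (1 - Real.exp (-t))| / (1 - Real.exp (-t)) ^ r
      ≤ t ^ (k + r) * (2 * Real.exp (-t) * (t ^ (-(1/2) : ℝ) * (1 + t))) / (t / (1 + t)) ^ r := by
        gcongr
    _ = 2 * Real.exp (-t) * t ^ k * t ^ (-(1/2) : ℝ) * (1 + t) ^ (r + 1) := by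
        rw [div_pow]; field_simp; ring
    _ ≤ 2 * Real.exp (-t) * t ^ k * t ^ (-(1/2) : ℝ) * (2 ^ r * (1 + t ^ (r + 1))) := by
        gcongr
    _ = _ := by ring
end
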